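/- Identification of the limiting projection direction: let Σ be a symmetric positive definite real p×p matrix, β ∈ Q, and x ∈ ℝ^p. Then there exists A > 0 such that for every a ≥ A, P_{Q,Σ}(aβ + x) − aβ = P_{Q_β,Σ}(x); consequently Θ_{Q,Σ}(β, x) = lim_{n→∞} (P_{Q,Σ}(nβ + x) − nβ) exists and equals P_{Q_β,Σ}(x). -/

import Mathlib

open Matrix

/-- The metric projection `P_{C,Σ}(x) = argmin_{β ∈ C} (β - x)ᵀ Σ (β - x)`
(chosen via the axiom of choice; for `Σ` positive definite and `C` nonempty
closed convex it is the unique minimizer). -/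
noncomputable def metricProj {p : ℕ} (S : Matrix (Fin p) (Fin p) ℝ)
    (C : Set (Fin p → ℝ)) (x : Fin p → ℝ) : Fin p → ℝ :=
  Classical.epsilon fun γ => γ ∈ C ∧ ∀ β ∈ C,
    (γ - x) ⬝ᵥ S.mulVec (γ - x) ≤ (β - x) ⬝ᵥ S.mulVec (β - x)

/-- The constraint cone `Q = {β ∈ ℝ^p : β_j ≥ 0 for j = 1,…,q}`. -/
def coneQ (p q : ℕ) : Set (Fin p → ℝ) :=
  {v | ∀ j : Fin p, (j : ℕ) < q → 0 ≤ v j}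

/-- The tangent cone `Q_β = {v ∈ ℝ^p : v_j ≥ 0 whenever j ≤ q and β_j = 0}`. -/
def coneQat (p q : ℕ) (β : Fin p → ℝ) : Set (Fin p → ℝ) :=
  {v | ∀ j : Fin p, (j : ℕ) < q → β j = 0 → 0 ≤ v j}

lemma qf_smul {p : ℕ} (S : Matrix (Fin p) (Fin p) ℝ) (t : ℝ) (v : Fin p → ℝ) :
    (t • v) ⬝ᵥ S.mulVec (t • v) = t ^ 2 * (v ⬝ᵥ S.mulVec v) := by
  rw [Matrix.mulVec_smul, smul_dotProduct, dotProduct_smul, smul_eq_mul, smul_eq_mul]; ring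

lemma qf_cont {p : ℕ} (S : Matrix (Fin p) (Fin p) ℝ) :
    Continuous (fun v : Fin p → ℝ => v ⬝ᵥ S.mulVec v) := by
  fun_prop

lemma qf_pos {p : ℕ} {S : Matrix (Fin p) (Fin p) ℝ} (hpd : S.PosDef) {v : Fin p → ℝ}
    (hv : v ≠ 0) : 0 < v ⬝ᵥ S.mulVec v := by
  simpa using hpd.dotProduct_mulVec_pos hv

lemma qf_coercive {p : ℕ} {S : Matrix (Fin p) (Fin p) ℝ} (hpd : S.PosDef) :
    ∃ c > (0:ℝ), ∀ v : Fin p → ℝ, c * ‖v‖ ^ 2 ≤ v ⬝ᵥ S.mulVec v := by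
  obtain ⟨c, hc, h⟩ := (isCompact_sphere (0 : Fin p → ℝ) 1).exists_forall_le'
    (qf_cont S).continuousOn (a := 0) (fun b hb => qf_pos hpd (by
      rintro rfl; simp at hb))
  refine ⟨c, hc, fun v => ?_⟩
  by_cases hv : v = 0
  · simp [hv]
  have hn : 0 < ‖v‖ := norm_pos_iff.2 hv
  have h1 := h (‖v‖⁻¹ • v) (by simp [norm_smul, hn.ne'])
  rw [qf_smul] at h1
  have h2 := mul_le_mul_of_nonneg_right h1 (sq_nonneg ‖v‖)
  have h3 : ‖v‖⁻¹ ^ 2 * (v ⬝ᵥ S.mulVec v) * ‖v‖ ^ 2 = v ⬝ᵥ S.mulVec v := by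
    field_simp
  linarith

lemma exists_min {p : ℕ} {S : Matrix (Fin p) (Fin p) ℝ} (hpd : S.PosDef)
    {C : Set (Fin p → ℝ)} (hC : IsClosed C) {y : Fin p → ℝ} (hy : y ∈ C) (x : Fin p → ℝ) :
    ∃ γ, γ ∈ C ∧ ∀ β ∈ C,
      (γ - x) ⬝ᵥ S.mulVec (γ - x) ≤ (β - x) ⬝ᵥ S.mulVec (β - x) := by
  obtain ⟨c, hc, h⟩ := qf_coercive hpd
  have hcont : Continuous (fun v : Fin p → ℝ => (v - x) ⬝ᵥ S.mulVec (v - x)) :=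
    (qf_cont S).comp (continuous_id.sub continuous_const)
  have ht : Filter.Tendsto (fun v : Fin p → ℝ => c * (‖v‖ - ‖x‖) ^ 2)
      (Filter.cocompact _) Filter.atTop := by
    refine Filter.Tendsto.const_mul_atTop hc ?_
    refine (Filter.tendsto_pow_atTop two_ne_zero).comp ?_
    exact Filter.tendsto_atTop_add_const_right _ (-‖x‖) (tendsto_norm_cocompact_atTop (E := Fin p → ℝ))
  have hev : ∀ᶠ v in Filter.cocompact _ ⊓ Filter.principal C,
      (y - x) ⬝ᵥ S.mulVec (y - x) ≤ (v - x) ⬝ᵥ S.mulVec (v - x) := by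
    refine Filter.Eventually.filter_mono inf_le_left ?_
    filter_upwards [ht.eventually_ge_atTop ((y - x) ⬝ᵥ S.mulVec (y - x))] with v hv
    have h1 : (‖v‖ - ‖x‖) ^ 2 ≤ ‖v - x‖ ^ 2 := by
      rw [← sq_abs]
      exact pow_le_pow_left₀ (abs_nonneg _) (abs_norm_sub_norm_le v x) 2
    exact hv.trans ((mul_le_mul_of_nonneg_left h1 hc.le).trans (h _))
  obtain ⟨γ, h1, h2⟩ := hcont.continuousOn.exists_isMinOn' hC hy hev
  exact ⟨γ, h1, fun b hb => h2 hb⟩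

lemma min_unique {p : ℕ} {S : Matrix (Fin p) (Fin p) ℝ} (hpd : S.PosDef)
    {C : Set (Fin p → ℝ)} (hC : Convex ℝ C) {x u v : Fin p → ℝ}
    (hu : u ∈ C) (hv : v ∈ C)
    (hum : ∀ β ∈ C, (u - x) ⬝ᵥ S.mulVec (u - x) ≤ (β - x) ⬝ᵥ S.mulVec (β - x))
    (hvm : ∀ β ∈ C, (v - x) ⬝ᵥ S.mulVec (v - x) ≤ (β - x) ⬝ᵥ S.mulVec (β - x)) : u = v := by
  by_contra hne
  have hpos := qf_pos hpd (sub_ne_zero.2 hne)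
  have hm : (1/2 : ℝ) • u + (1/2 : ℝ) • v ∈ C :=
    hC hu hv (by norm_num) (by norm_num) (by norm_num)
  have h1 := hum _ hm
  have h2 := hvm _ hm
  have e1 : (1/2 : ℝ) • u + (1/2 : ℝ) • v - x = (1/2 : ℝ) • ((u - x) + (v - x)) := by
    ext i; simp; ring
  have e2 : u - v = (u - x) - (v - x) := by abel
  rw [e1, qf_smul] at h1 h2
  rw [e2] at hpos
  generalize u - x = a at *
  generalize v - x = b at *
  simp only [Matrix.mulVec_add, Matrix.mulVec_sub, add_dotProduct, sub_dotProduct,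
    dotProduct_add, dotProduct_sub] at h1 h2 hpos
  linarith

lemma metricProj_eq {p : ℕ} {S : Matrix (Fin p) (Fin p) ℝ} (hpd : S.PosDef)
    {C : Set (Fin p → ℝ)} (hC : Convex ℝ C) {x u : Fin p → ℝ} (hu : u ∈ C)
    (hum : ∀ β ∈ C, (u - x) ⬝ᵥ S.mulVec (u - x) ≤ (β - x) ⬝ᵥ S.mulVec (β - x)) :
    metricProj S C x = u := by
  have h := Classical.epsilon_spec (p := fun γ => γ ∈ C ∧ ∀ β ∈ C,
    (γ - x) ⬝ᵥ S.mulVec (γ - x) ≤ (β - x) ⬝ᵥ S.mulVec (β - x)) ⟨u, hu, hum⟩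
  exact min_unique hpd hC h.1 hu h.2 hum

lemma coneQ_convex (p q : ℕ) : Convex ℝ (coneQ p q) := by
  intro u hu v hv a b ha hb _ j hj
  have := mul_nonneg ha (hu j hj)
  have := mul_nonneg hb (hv j hj)
  simp only [Pi.add_apply, Pi.smul_apply, smul_eq_mul]
  linarith

lemma coneQat_convex (p q : ℕ) (β : Fin p → ℝ) : Convex ℝ (coneQat p q β) := by
  intro u hu v hv a b ha hb _ j hj hj'
  have := mul_nonneg ha (hu j hj hj')
  have := mul_nonneg hb (hv j hj hj')
  simp only [Pi.add_apply, Pi.smul_apply, smul_eq_mul]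
  linarith

lemma coneQat_closed (p q : ℕ) (β : Fin p → ℝ) : IsClosed (coneQat p q β) := by
  simp only [coneQat, Set.setOf_forall]
  exact isClosed_iInter fun j => isClosed_iInter fun _ => isClosed_iInter fun _ =>
    isClosed_le continuous_const (continuous_apply j)

lemma main_part {p q : ℕ} (S : Matrix (Fin p) (Fin p) ℝ) (hpd : S.PosDef)
    (β : Fin p → ℝ) (hβ : β ∈ coneQ p q) (x : Fin p → ℝ) :
    ∃ A > (0:ℝ), ∀ a : ℝ, A ≤ a →
      metricProj S (coneQ p q) (a • β + x) - a • β =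
        metricProj S (coneQat p q β) x := by
  obtain ⟨γ, hγ, hmin⟩ := exists_min hpd (coneQat_closed p q β) (y := 0)
    (fun _ _ _ => le_rfl) x
  rw [metricProj_eq hpd (coneQat_convex p q β) hγ hmin]
  refine ⟨1 + ∑ j, |γ j| / |β j|, by positivity, fun a ha => ?_⟩
  have hmem : a • β + γ ∈ coneQ p q := by
    intro j hj
    simp only [Pi.add_apply, Pi.smul_apply, smul_eq_mul]
    rcases (hβ j hj).eq_or_lt with h0 | h0
    · have := hγ j hj h0.symm
      rw [← h0]; linarith
    · have h1 : |γ j| / |β j| ≤ ∑ j, |γ j| / |β j| :=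
        Finset.single_le_sum (f := fun j => |γ j| / |β j|)
          (fun i _ => by positivity) (Finset.mem_univ j)
      have h2 : |γ j| / |β j| ≤ a := by linarith
      rw [abs_of_pos h0, div_le_iff₀ h0] at h2
      linarith [neg_abs_le (γ j)]
  rw [metricProj_eq hpd (coneQ_convex p q) hmem]
  · abel
  · intro δ hδ
    have h := hmin (δ - a • β) (by
      intro j hj h0
      simpa [h0] using hδ j hj)
    have e1 : a • β + γ - (a • β + x) = γ - x := by abel
    have e2 : δ - (a • β + x) = δ - a • β - x := by abel
    rw [e1, e2]
    exact h

/-- Identification of the limiting projection direction: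
`Θ_{Q,Σ}(β,x)` exists and equals `P_{Q_β,Σ}(x)`. -/
theorem limiting_projection_identification {p q : ℕ} (hq : 1 ≤ q) (hqp : q ≤ p)
    (S : Matrix (Fin p) (Fin p) ℝ) (hsymm : S.IsSymm) (hpd : S.PosDef)
    (β : Fin p → ℝ) (hβ : β ∈ coneQ p q) (x : Fin p → ℝ) :
    (∃ A > (0:ℝ), ∀ a : ℝ, A ≤ a →
      metricProj S (coneQ p q) (a • β + x) - a • β =
        metricProj S (coneQat p q β) x) ∧
    Filter.Tendsto
      (fun n : ℕ => metricProj S (coneQ p q) ((n : ℝ) • β + x) - (n : ℝ) • β)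
      Filter.atTop (nhds (metricProj S (coneQat p q β) x)) := by
  obtain ⟨A, hA, h⟩ := main_part S hpd β hβ x
  refine ⟨⟨A, hA, h⟩, ?_⟩
  refine tendsto_const_nhds.congr' ?_
  filter_upwards [(tendsto_natCast_atTop_atTop (R := ℝ)).eventually_ge_atTop A] with n hn
  exact (h n hn).symm
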